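/- Let α and β be nonempty permutations, and let σ be a nonempty permutation that contains no interval copy of any permutation of the form α′ ⊕ β′ with α′, β′ nonempty, α′ ≤ α and β′ ≤ β. Then α ⊕ 1 ⊕ β is σ-narrow with σ-core α ⊕ β, and α ⊕ 1 ⊕ β is a σ-annihilator. -/

import Mathlib

/-!
The permutation pattern poset and its Möbius function.

A permutation of length `n` is represented as an element of the symmetric
group on `Fin n`; the collection of all permutations of all lengths is the
sigma type `PPerm`.  Pattern containment `PPerm.Le` makes `PPerm` into the
permutation pattern poset, and `mu` is its Möbius function, defined by the
usual recursion `μ(σ,σ) = 1`, `μ(σ,π) = -∑_{σ ≤ λ < π} μ(σ,λ)` for `σ < π`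
and `μ(σ,π) = 0` otherwise.
-/

open scoped Classical

/-- A permutation of an arbitrary finite length `n`, as an element of the
symmetric group on `Fin n`. -/
abbrev PPerm : Type := Σ n : ℕ, Equiv.Perm (Fin n)

namespace PPerm

/-- Classical pattern containment `σ ≤ π`: there is a strictly increasing map
of positions along which `π` realises the same relative order as `σ`. -/
def Le (σ π : PPerm) : Prop :=
  ∃ f : Fin σ.1 → Fin π.1, StrictMono f ∧
    ∀ a b : Fin σ.1, σ.2 a < σ.2 b ↔ π.2 (f a) < π.2 (f b)

/-- Strict pattern containment. -/
def Lt (σ π : PPerm) : Prop := Le σ π ∧ σ ≠ π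

/-- The permutation `1` of length one. -/
def one : PPerm := ⟨1, 1⟩

/-- The direct sum `α ⊕ β` of two permutations: `β` is placed after and
above `α`. -/
def dsum (α β : PPerm) : PPerm :=
  ⟨α.1 + β.1, finSumFinEquiv.symm.trans ((Equiv.sumCongr α.2 β.2).trans finSumFinEquiv)⟩

end PPerm

/-- Fuelled recursion computing the Möbius function of the permutation
pattern poset.  Any `λ` with `σ ≤ λ < π` has length `< |π|`, so for any
fuel `≥ |π| + 1` this computes the standard recursion
`μ(σ,σ) = 1`, `μ(σ,π) = -∑_{σ ≤ λ < π} μ(σ,λ)` for `σ < π`, and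
`μ(σ,π) = 0` when `σ ≰ π`. -/
noncomputable def muAux : ℕ → PPerm → PPerm → ℤ
  | 0, _, _ => 0
  | n + 1, σ, π =>
    if σ = π then 1
    else if PPerm.Le σ π then
      - ∑ m ∈ Finset.range π.1,
          ∑ p ∈ Finset.univ.filter
              (fun p : Equiv.Perm (Fin m) => PPerm.Le σ ⟨m, p⟩ ∧ PPerm.Le ⟨m, p⟩ π),
            muAux n σ ⟨m, p⟩
    else 0

/-- The Möbius function of the permutation pattern poset. -/
noncomputable def mu (σ π : PPerm) : ℤ := muAux (π.1 + 1) σ π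

/-- The closed interval `[σ, π]` of the permutation pattern poset, as a
finset (any `λ ≤ π` has length `≤ |π|`). -/
noncomputable def intervalCC (σ π : PPerm) : Finset PPerm :=
  (Finset.range (π.1 + 1)).biUnion fun m =>
    (Finset.univ.filter fun p : Equiv.Perm (Fin m) =>
        PPerm.Le σ ⟨m, p⟩ ∧ PPerm.Le ⟨m, p⟩ π).image fun p => (⟨m, p⟩ : PPerm)

/-- The half-open interval `[σ, π)` of the permutation pattern poset. -/
noncomputable def intervalCO (σ π : PPerm) : Finset PPerm :=
  (intervalCC σ π).filter fun lam => lam ≠ π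

/-- `π` contains an interval copy of `α`: there is a set of `|α|` contiguous
positions of `π` (starting at position `i`), whose values form a contiguous
range (starting at value `v`), and whose entries are order-isomorphic
to `α`. -/
def HasIntervalCopy (π α : PPerm) : Prop :=
  ∃ (f : Fin α.1 → Fin π.1) (i v : ℕ),
    (∀ a : Fin α.1, (f a : ℕ) = i + (a : ℕ)) ∧
    (∀ a : Fin α.1, v ≤ (π.2 (f a) : ℕ) ∧ (π.2 (f a) : ℕ) < v + α.1) ∧
    (∀ a b : Fin α.1, α.2 a < α.2 b ↔ π.2 (f a) < π.2 (f b))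

/-- `φ` is a `σ`-annihilator: every permutation containing an interval copy
of `φ` is a `σ`-zero, i.e. has `μ(σ,·) = 0`. -/
def IsSigmaAnnihilator (σ φ : PPerm) : Prop :=
  ∀ π : PPerm, HasIntervalCopy π φ → mu σ π = 0

/-- `φ` is `σ`-narrow with `σ`-core `φ⁻`: `φ⁻` is a permutation of length
`|φ| − 1` contained in `φ` such that every (nonempty) permutation in
`[1,φ) ∖ [1,φ⁻]` is a `σ`-annihilator. -/
def IsSigmaNarrowWithCore (σ φ φm : PPerm) : Prop :=
  φm.1 + 1 = φ.1 ∧ PPerm.Le φm φ ∧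
    ∀ lam : PPerm, 0 < lam.1 → PPerm.Lt lam φ → ¬ PPerm.Le lam φm →
      IsSigmaAnnihilator σ lam

/-! Call a permutation `π` a *sandwich* if it has an interval consisting of nonempty blocks `A` and
`B`, with patterns below `α` and `β`, and a single entry `m` between them, where `A`, `m`, `B`
ascend in both position and value. By induction on the length, every sandwich `π` is a `σ`-zero.
Let `ρ` be `π` with `m` deleted. A pattern `λ < π` with `λ ≰ ρ` has to use `m`, and also an entry
of `A` and one of `B`: if it missed `A`, say, its `m` could be moved into `A`. Hence `λ` is a
shorter sandwich, so `μ(σ, λ) = 0`, and the sum defining `μ(σ, π)` collapses to the sum of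
`μ(σ, ·)` over `[σ, ρ]`, which vanishes. Here `σ ∉ {π, ρ}`, as `A ∪ {m}` in `π` and `A ∪ B` in `ρ`
are interval copies of sums `α' ⊕ β'`. -/

section Order

variable {ι X : Type*} [LinearOrder X] {J K : Set X}

theorem lt_iff_lt_of_notMem_ordConnected (hJ : J.OrdConnected) {x y z : X} (hx : x ∉ J)
    (hy : y ∈ J) (hz : z ∈ J) : x < y ↔ x < z := by
  suffices h : ∀ {y z}, y ∈ J → z ∈ J → x < y → x < z from ⟨h hy hz, h hz hy⟩
  intro y z hy hz hxy
  by_contra! hzx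
  exact hx (hJ.out hz hy ⟨hzx, hxy.le⟩)

theorem update_lt_update_iff_of_ordConnected [DecidableEq ι] (hJ : J.OrdConnected) {h : ι → X}
    {i : ι} {c : X} (hi : h i ∈ J) (hc : c ∈ J) (hout : ∀ j, j ≠ i → h j ∉ J) (x y : ι) :
    Function.update h i c x < Function.update h i c y ↔ h x < h y := by
  by_cases hx : x = i <;> by_cases hy : y = i
  · simp [hx, hy]
  · subst hx
    rw [Function.update_self, Function.update_of_ne hy]
    exact lt_iff_lt_of_notMem_ordConnected hJ.dual (hout y hy) hc hi
  · subst hy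
    rw [Function.update_self, Function.update_of_ne hx]
    exact lt_iff_lt_of_notMem_ordConnected hJ (hout x hx) hc hi
  · rw [Function.update_of_ne hx, Function.update_of_ne hy]

theorem ordConnected_left_of_union (h : (J ∪ K).OrdConnected) (hJK : ∀ x ∈ J, ∀ y ∈ K, x < y) :
    J.OrdConnected := by
  refine ⟨fun x hx y hy z hz => ?_⟩
  rcases h.out (.inl hx) (.inl hy) hz with hzJ | hzK
  · exact hzJ
  · exact absurd hz.2 (hJK y hy z hzK).not_ge

theorem ordConnected_right_of_union (h : (J ∪ K).OrdConnected) (hJK : ∀ x ∈ J, ∀ y ∈ K, x < y) :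
    K.OrdConnected := by
  rw [Set.union_comm] at h
  exact (ordConnected_left_of_union (X := Xᵒᵈ) h.dual fun y hy x hx => hJK x hx y hy).dual

theorem ordConnected_image_of_ordConnected_range {Y : Type*} [LinearOrder Y] {f : X → Y}
    (hf : StrictMono f) (hr : (Set.range f).OrdConnected) (hJ : J.OrdConnected) :
    (f '' J).OrdConnected := by
  refine ⟨?_⟩
  rintro _ ⟨x, hx, rfl⟩ _ ⟨y, hy, rfl⟩ w hw
  obtain ⟨z, rfl⟩ := hr.out ⟨x, rfl⟩ ⟨y, rfl⟩ hw
  exact ⟨z, hJ.out hx hy ⟨hf.le_iff_le.1 hw.1, hf.le_iff_le.1 hw.2⟩, rfl⟩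

theorem ordConnected_range_iff_exists_val_eq_add {k n : ℕ} {f : Fin k → Fin n}
    (hf : StrictMono f) :
    (Set.range f).OrdConnected ↔ ∃ i : ℕ, ∀ a, (f a : ℕ) = i + (a : ℕ) := by
  constructor
  · intro h
    rcases k with _ | k
    · exact ⟨0, fun a => a.elim0⟩
    refine ⟨f 0, fun a => ?_⟩
    induction a using Fin.induction with
    | zero => rfl
    | succ a ih =>
      have hcov : f a.castSucc ⋖ f a.succ :=
        (h.apply_covBy_apply_iff (.ofStrictMono f hf)).2 (by simp [Fin.covBy_iff])
      rw [Fin.covBy_iff, Nat.covBy_iff_add_one_eq] at hcov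
      simp only [Fin.val_castSucc, Fin.val_succ] at ih ⊢
      omega
  · rintro ⟨i, hi⟩
    refine ⟨?_⟩
    rintro _ ⟨a, rfl⟩ _ ⟨b, rfl⟩ x ⟨hax, hxb⟩
    rw [Fin.le_def, hi] at hax hxb
    exact ⟨⟨x - i, by omega⟩, Fin.ext (by rw [hi]; simp only; omega)⟩

theorem val_eq_add_of_strictMono_of_bounds {k n v : ℕ} {h : Fin k → Fin n} (hh : StrictMono h)
    (hv : ∀ b, v ≤ (h b : ℕ) ∧ (h b : ℕ) < v + k) (b : Fin k) : (h b : ℕ) = v + (b : ℕ) := by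
  have hmono : StrictMono fun b : Fin k => (⟨h b - v, by have := hv b; omega⟩ : Fin k) := by
    intro x y hxy
    have hlt := Fin.lt_def.1 (hh hxy)
    have hx := (hv x).1
    exact Fin.lt_def.2 (by simp only; omega)
  have hfix := congrArg Fin.val (hmono.apply_eq (x := b))
  have hb := (hv b).1
  simp only at hfix
  omega

end Order

namespace PPerm

variable {σ τ υ π ρ α β : PPerm}

/-- `f` lists the positions of an occurrence of the pattern `σ` in `π`, so that `Le σ π` unfolds
to `∃ f, IsOccurrence σ π f`. -/
def IsOccurrence (σ π : PPerm) (f : Fin σ.1 → Fin π.1) : Prop :=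
  StrictMono f ∧ ∀ a b : Fin σ.1, σ.2 a < σ.2 b ↔ π.2 (f a) < π.2 (f b)

namespace IsOccurrence

variable {f : Fin σ.1 → Fin π.1}

theorem strictMono (hf : IsOccurrence σ π f) : StrictMono f := hf.1

theorem apply_lt_iff (hf : IsOccurrence σ π f) {a b : Fin σ.1} :
    π.2 (f a) < π.2 (f b) ↔ σ.2 a < σ.2 b := (hf.2 a b).symm

theorem le (hf : IsOccurrence σ π f) : Le σ π := ⟨f, hf⟩

theorem comp {g : Fin π.1 → Fin τ.1} (hg : IsOccurrence π τ g) (hf : IsOccurrence σ π f) :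
    IsOccurrence σ τ (g ∘ f) :=
  ⟨hg.strictMono.comp hf.strictMono, fun a b => (hf.2 a b).trans (hg.2 _ _)⟩

theorem strictMono_values (hf : IsOccurrence σ π f) : StrictMono (π.2 ∘ f ∘ σ.2.symm) :=
  fun a b hab => hf.apply_lt_iff.2 (by simpa using hab)

theorem le_of_range_subset (hf : IsOccurrence σ π f) {g : Fin τ.1 → Fin π.1}
    (hg : IsOccurrence τ π g) (h : Set.range f ⊆ Set.range g) : Le σ τ := by
  choose k hk using fun a => h ⟨a, rfl⟩
  refine ⟨k, fun a b hab => ?_, fun a b => ?_⟩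
  · rw [← hg.strictMono.lt_iff_lt, hk, hk]
    exact hf.strictMono hab
  · rw [← hg.apply_lt_iff, hk, hk, hf.apply_lt_iff]

end IsOccurrence

theorem isOccurrence_id (π : PPerm) : IsOccurrence π π id := ⟨strictMono_id, fun _ _ => Iff.rfl⟩

theorem isOccurrence_one (x : Fin π.1) : IsOccurrence one π fun _ => x :=
  ⟨Subsingleton.strictMono (α := Fin 1) _, fun a b => by
    simp [Subsingleton.elim (α := Fin 1) a b]⟩

theorem exists_isOccurrence_range_eq (π : PPerm) (S : Set (Fin π.1)) :
    ∃ τ f, IsOccurrence τ π f ∧ Set.range f = S := by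
  let f := S.toFinset.orderEmbOfFin rfl
  let s := Tuple.sort (π.2 ∘ f)
  have hs : StrictMono ((π.2 ∘ f) ∘ s) := (Tuple.monotone_sort _).strictMono_of_injective
    ((π.2.injective.comp f.injective).comp s.injective)
  refine ⟨⟨_, s⁻¹⟩, f, ⟨f.strictMono, fun a b => ?_⟩, by simp [f]⟩
  simpa using (hs.lt_iff_lt (a := s⁻¹ a) (b := s⁻¹ b)).symm

theorem Le.refl (π : PPerm) : Le π π := (isOccurrence_id π).le

theorem Le.trans (h : Le σ τ) (h' : Le τ π) : Le σ π := by
  obtain ⟨f, hf⟩ := h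
  obtain ⟨g, hg⟩ := h'
  exact (IsOccurrence.comp hg hf).le

theorem Le.length_le (h : Le σ π) : σ.1 ≤ π.1 := by
  obtain ⟨f, hf, -⟩ := h
  simpa using Fintype.card_le_of_injective f hf.injective

theorem Le.eq_of_length_eq (h : Le σ π) (hlen : σ.1 = π.1) : σ = π := by
  obtain ⟨n, p⟩ := σ
  obtain ⟨m, q⟩ := π
  obtain rfl : n = m := hlen
  obtain ⟨f, hf : IsOccurrence ⟨n, p⟩ ⟨n, q⟩ f⟩ := h
  obtain rfl : f = id := hf.strictMono.eq_id
  have hqp : q ∘ id ∘ p.symm = id := hf.strictMono_values.eq_id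
  have : q = p := Equiv.ext fun a => by simpa using congrFun hqp (p a)
  rw [this]

theorem Le.length_lt (h : Le σ π) (hne : σ ≠ π) : σ.1 < π.1 :=
  lt_of_le_of_ne h.length_le fun hlen => hne (h.eq_of_length_eq hlen)

end PPerm

section Moebius

open PPerm

variable {σ π ρ : PPerm}

theorem mem_intervalCC {l : PPerm} : l ∈ intervalCC σ π ↔ Le σ l ∧ Le l π := by
  simp only [intervalCC, Finset.mem_biUnion, Finset.mem_range, Finset.mem_image,
    Finset.mem_filter, Finset.mem_univ, true_and]
  constructor
  · rintro ⟨m, -, p, h, rfl⟩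
    exact h
  · exact fun h => ⟨l.1, Nat.lt_succ_of_le h.2.length_le, l.2, h, rfl⟩

theorem mem_intervalCO {l : PPerm} : l ∈ intervalCO σ π ↔ Le σ l ∧ Le l π ∧ l ≠ π := by
  rw [intervalCO, Finset.mem_filter, mem_intervalCC, and_assoc]

theorem intervalCO_eq_sigma (σ π : PPerm) : intervalCO σ π = (Finset.range π.1).sigma fun m =>
    Finset.univ.filter fun p : Equiv.Perm (Fin m) => Le σ ⟨m, p⟩ ∧ Le ⟨m, p⟩ π := by
  ext l
  simp only [mem_intervalCO, Finset.mem_sigma, Finset.mem_range, Finset.mem_filter,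
    Finset.mem_univ, true_and]
  constructor
  · exact fun ⟨h₁, h₂, hne⟩ => ⟨h₂.length_lt hne, h₁, h₂⟩
  · rintro ⟨hlt, h₁, h₂⟩
    exact ⟨h₁, h₂, fun h => hlt.ne (congrArg Sigma.fst h)⟩

theorem muAux_succ (n : ℕ) (σ π : PPerm) : muAux (n + 1) σ π =
    if σ = π then 1 else if Le σ π then -∑ l ∈ intervalCO σ π, muAux n σ l else 0 := by
  rw [muAux, intervalCO_eq_sigma, Finset.sum_sigma]

theorem muAux_eq_mu {n : ℕ} (h : π.1 < n) : muAux n σ π = mu σ π := by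
  suffices H : ∀ n m π, π.1 < n → π.1 < m → muAux n σ π = muAux m σ π from
    H _ _ π h (Nat.lt_succ_self _)
  intro n
  induction n with
  | zero => exact fun _ _ h => absurd h (Nat.not_lt_zero _)
  | succ n ih =>
    rintro (_ | m) π hn hm
    · exact absurd hm (Nat.not_lt_zero _)
    rw [muAux_succ, muAux_succ, Finset.sum_congr rfl]
    intro l hl
    obtain ⟨-, hle, hne⟩ := mem_intervalCO.1 hl
    have := hle.length_lt hne
    exact ih m l (by omega) (by omega)

theorem mu_eq (σ π : PPerm) : mu σ π =
    if σ = π then 1 else if Le σ π then -∑ l ∈ intervalCO σ π, mu σ l else 0 := by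
  rw [mu, muAux_succ, Finset.sum_congr rfl]
  intro l hl
  obtain ⟨-, hle, hne⟩ := mem_intervalCO.1 hl
  exact muAux_eq_mu (hle.length_lt hne)

theorem sum_mu_intervalCC_eq_zero (h : σ ≠ π) : ∑ l ∈ intervalCC σ π, mu σ l = 0 := by
  by_cases hle : Le σ π
  · have hins : intervalCC σ π = insert π (intervalCO σ π) := by
      ext l
      rw [Finset.mem_insert, mem_intervalCO, mem_intervalCC]
      by_cases hl : l = π
      · simp [hl, hle, Le.refl]
      · simp [hl]
    rw [hins, Finset.sum_insert (by simp [mem_intervalCO]), mu_eq σ π, if_neg h, if_pos hle,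
      neg_add_cancel]
  · refine Finset.sum_eq_zero fun l hl => absurd ?_ hle
    exact (mem_intervalCC.1 hl).1.trans (mem_intervalCC.1 hl).2

theorem mu_eq_zero_of_forall_not_le (hρ : Lt ρ π) (hπ : σ ≠ π) (hσρ : σ ≠ ρ)
    (hzero : ∀ l, Lt l π → ¬ Le l ρ → mu σ l = 0) : mu σ π = 0 := by
  rw [mu_eq, if_neg hπ]
  split_ifs with hle
  · rw [neg_eq_zero, ← sum_mu_intervalCC_eq_zero hσρ]
    symm
    refine Finset.sum_subset (fun l hl => ?_) fun l hl hl' => ?_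
    · obtain ⟨hσl, hlρ⟩ := mem_intervalCC.1 hl
      refine mem_intervalCO.2 ⟨hσl, hlρ.trans hρ.1, ?_⟩
      rintro rfl
      exact hρ.2 (hρ.1.eq_of_length_eq (hρ.1.length_le.antisymm hlρ.length_le))
    · obtain ⟨hσl, hlπ⟩ := mem_intervalCO.1 hl
      exact hzero l hlπ fun hlρ => hl' (mem_intervalCC.2 ⟨hσl, hlρ⟩)
  · rfl

end Moebius

namespace PPerm

variable {σ τ υ π ρ α β : PPerm}

/-- The positions of the summand `α` in `α ⊕ β`. -/
def dsumInl (α β : PPerm) : Fin α.1 → Fin (dsum α β).1 := Fin.castAdd β.1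

/-- The positions of the summand `β` in `α ⊕ β`. -/
def dsumInr (α β : PPerm) : Fin β.1 → Fin (dsum α β).1 := Fin.natAdd α.1

theorem dsum_apply_dsumInl (α β : PPerm) (a : Fin α.1) :
    (dsum α β).2 (dsumInl α β a) = dsumInl α β (α.2 a) := by
  change finSumFinEquiv (α.2.sumCongr β.2 (finSumFinEquiv.symm (Fin.castAdd β.1 a))) = _
  simp [dsumInl]

theorem dsum_apply_dsumInr (α β : PPerm) (b : Fin β.1) :
    (dsum α β).2 (dsumInr α β b) = dsumInr α β (β.2 b) := by
  change finSumFinEquiv (α.2.sumCongr β.2 (finSumFinEquiv.symm (Fin.natAdd α.1 b))) = _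
  simp [dsumInr]

theorem dsumInl_lt_dsumInr (a : Fin α.1) (b : Fin β.1) : dsumInl α β a < dsumInr α β b :=
  Fin.lt_def.2 (a.isLt.trans_le (Nat.le_add_right _ _))

theorem isOccurrence_dsumInl (α β : PPerm) : IsOccurrence α (dsum α β) (dsumInl α β) := by
  have hmono : StrictMono (dsumInl α β) := Fin.strictMono_castAdd _
  refine ⟨hmono, fun a b => ?_⟩
  rw [dsum_apply_dsumInl, dsum_apply_dsumInl, hmono.lt_iff_lt]

theorem isOccurrence_dsumInr (α β : PPerm) : IsOccurrence β (dsum α β) (dsumInr α β) := by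
  have hmono : StrictMono (dsumInr α β) := Fin.strictMono_natAdd _
  refine ⟨hmono, fun a b => ?_⟩
  rw [dsum_apply_dsumInr, dsum_apply_dsumInr, hmono.lt_iff_lt]

theorem range_dsumInl_union_range_dsumInr (α β : PPerm) :
    Set.range (dsumInl α β) ∪ Set.range (dsumInr α β) = Set.univ := by
  refine Set.eq_univ_of_forall fun x : Fin (α.1 + β.1) => ?_
  induction x using Fin.addCases with
  | left a => exact .inl ⟨a, rfl⟩
  | right b => exact .inr ⟨b, rfl⟩

/-- The entries of `π` at positions `A` lie before and below those at positions `B`. -/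
def IsBelow (π : PPerm) (A B : Set (Fin π.1)) : Prop :=
  ∀ a ∈ A, ∀ b ∈ B, a < b ∧ π.2 a < π.2 b

namespace IsBelow

variable {A B C : Set (Fin π.1)}

theorem mono {A' B' : Set (Fin π.1)} (h : IsBelow π A B) (hA : A' ⊆ A) (hB : B' ⊆ B) :
    IsBelow π A' B' := fun a ha b hb => h a (hA ha) b (hB hb)

theorem union_right (hB : IsBelow π A B) (hC : IsBelow π A C) : IsBelow π A (B ∪ C) :=
  fun a ha _ hx => hx.elim (hB a ha _) (hC a ha _)

theorem union_left (hA : IsBelow π A C) (hB : IsBelow π B C) : IsBelow π (A ∪ B) C :=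
  fun _ hx c hc => hx.elim (fun h => hA _ h c hc) fun h => hB _ h c hc

theorem trans (hAB : IsBelow π A B) (hBC : IsBelow π B C) (hB : B.Nonempty) : IsBelow π A C := by
  obtain ⟨b, hb⟩ := hB
  exact fun a ha c hc => ⟨(hAB a ha b hb).1.trans (hBC b hb c hc).1,
    (hAB a ha b hb).2.trans (hBC b hb c hc).2⟩

theorem preimage (h : IsBelow π A B) {f : Fin σ.1 → Fin π.1} (hf : IsOccurrence σ π f) :
    IsBelow σ (f ⁻¹' A) (f ⁻¹' B) := fun _ ha _ hb =>
  ⟨hf.strictMono.lt_iff_lt.1 (h _ ha _ hb).1, hf.apply_lt_iff.1 (h _ ha _ hb).2⟩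

theorem image (h : IsBelow π A B) {f : Fin π.1 → Fin τ.1} (hf : IsOccurrence π τ f) :
    IsBelow τ (f '' A) (f '' B) := by
  rintro _ ⟨a, ha, rfl⟩ _ ⟨b, hb, rfl⟩
  exact ⟨hf.strictMono (h a ha b hb).1, hf.apply_lt_iff.2 (h a ha b hb).2⟩

end IsBelow

theorem isBelow_range_dsumInl_range_dsumInr (α β : PPerm) :
    IsBelow (dsum α β) (Set.range (dsumInl α β)) (Set.range (dsumInr α β)) := by
  rintro _ ⟨a, rfl⟩ _ ⟨b, rfl⟩
  rw [dsum_apply_dsumInl, dsum_apply_dsumInr]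
  exact ⟨dsumInl_lt_dsumInr a b, dsumInl_lt_dsumInr _ _⟩

theorem IsOccurrence.exists_dsum {f : Fin τ.1 → Fin π.1} {g : Fin υ.1 → Fin π.1}
    (hf : IsOccurrence τ π f) (hg : IsOccurrence υ π g)
    (h : IsBelow π (Set.range f) (Set.range g)) :
    ∃ k, IsOccurrence (dsum τ υ) π k ∧ Set.range k = Set.range f ∪ Set.range g := by
  have hfg : ∀ a b, f a < g b ∧ π.2 (f a) < π.2 (g b) := fun a b => h _ ⟨a, rfl⟩ _ ⟨b, rfl⟩
  let k : Fin (dsum τ υ).1 → Fin π.1 := Fin.append f g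
  have hkl : ∀ a, k (dsumInl τ υ a) = f a := Fin.append_left f g
  have hkr : ∀ b, k (dsumInr τ υ b) = g b := Fin.append_right f g
  have hcases : ∀ x, (∃ a, dsumInl τ υ a = x) ∨ ∃ b, dsumInr τ υ b = x :=
    Set.eq_univ_iff_forall.1 (range_dsumInl_union_range_dsumInr τ υ)
  have hl := isOccurrence_dsumInl τ υ
  have hr := isOccurrence_dsumInr τ υ
  refine ⟨k, ⟨fun x y hxy => ?_, fun x y => ?_⟩, ?_⟩
  · rcases hcases x with ⟨a, rfl⟩ | ⟨a, rfl⟩ <;> rcases hcases y with ⟨b, rfl⟩ | ⟨b, rfl⟩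
    · simpa only [hkl] using hf.strictMono (hl.strictMono.lt_iff_lt.1 hxy)
    · simpa only [hkl, hkr] using (hfg a b).1
    · exact absurd hxy (dsumInl_lt_dsumInr b a).not_gt
    · simpa only [hkr] using hg.strictMono (hr.strictMono.lt_iff_lt.1 hxy)
  · rcases hcases x with ⟨a, rfl⟩ | ⟨a, rfl⟩ <;> rcases hcases y with ⟨b, rfl⟩ | ⟨b, rfl⟩
    · rw [hkl, hkl, hl.apply_lt_iff, hf.apply_lt_iff]
    · rw [hkl, hkr, dsum_apply_dsumInl, dsum_apply_dsumInr]
      exact iff_of_true (dsumInl_lt_dsumInr _ _) (hfg a b).2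
    · rw [hkl, hkr, dsum_apply_dsumInl, dsum_apply_dsumInr]
      exact iff_of_false (dsumInl_lt_dsumInr _ _).not_gt (hfg b a).2.not_gt
    · rw [hkr, hkr, hr.apply_lt_iff, hg.apply_lt_iff]
  · rw [← Set.image_univ, ← range_dsumInl_union_range_dsumInr, Set.image_union,
      ← Set.range_comp, ← Set.range_comp, show k ∘ dsumInl τ υ = f from funext hkl,
      show k ∘ dsumInr τ υ = g from funext hkr]

/-- The positions `I` form an interval of `π`: they are contiguous and carry contiguous values.
The empty set counts as an interval. -/
structure IsInterval (π : PPerm) (I : Set (Fin π.1)) : Prop where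
  positions : I.OrdConnected
  values : (π.2 '' I).OrdConnected

theorem isInterval_univ (π : PPerm) : IsInterval π Set.univ where
  positions := Set.ordConnected_univ
  values := by
    rw [Set.image_univ, π.2.range_eq_univ]
    exact Set.ordConnected_univ

namespace IsInterval

variable {I J : Set (Fin π.1)}

theorem left_of_union (h : IsInterval π (I ∪ J)) (hIJ : IsBelow π I J) : IsInterval π I where
  positions := ordConnected_left_of_union h.positions fun x hx y hy => (hIJ x hx y hy).1
  values := by
    have hv := h.values
    rw [Set.image_union] at hv
    refine ordConnected_left_of_union hv ?_
    rintro _ ⟨x, hx, rfl⟩ _ ⟨y, hy, rfl⟩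
    exact (hIJ x hx y hy).2

theorem right_of_union (h : IsInterval π (I ∪ J)) (hIJ : IsBelow π I J) : IsInterval π J where
  positions := ordConnected_right_of_union h.positions fun x hx y hy => (hIJ x hx y hy).1
  values := by
    have hv := h.values
    rw [Set.image_union] at hv
    refine ordConnected_right_of_union hv ?_
    rintro _ ⟨x, hx, rfl⟩ _ ⟨y, hy, rfl⟩
    exact (hIJ x hx y hy).2

theorem preimage (h : IsInterval π I) {f : Fin σ.1 → Fin π.1} (hf : IsOccurrence σ π f) :
    IsInterval σ (f ⁻¹' I) where
  positions := h.positions.preimage_mono hf.strictMono.monotone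
  values := by
    have himage : σ.2 '' (f ⁻¹' I) = (π.2 ∘ f ∘ σ.2.symm) ⁻¹' (π.2 '' I) := by
      simp only [Set.preimage_comp, π.2.preimage_image, σ.2.image_eq_preimage_symm]
    rw [himage]
    exact h.values.preimage_mono hf.strictMono_values.monotone

theorem image (h : IsInterval π I) {f : Fin π.1 → Fin τ.1} (hf : IsOccurrence π τ f)
    (hr : IsInterval τ (Set.range f)) : IsInterval τ (f '' I) where
  positions := ordConnected_image_of_ordConnected_range hf.strictMono hr.positions h.positions
  values := by
    have himage : τ.2 '' (f '' I) = (τ.2 ∘ f ∘ π.2.symm) '' (π.2 '' I) := by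
      simp only [Set.image_comp, π.2.symm_image_image]
    have hrange : Set.range (τ.2 ∘ f ∘ π.2.symm) = τ.2 '' Set.range f := by
      rw [Set.range_comp, π.2.symm.surjective.range_comp]
    rw [himage]
    exact ordConnected_image_of_ordConnected_range hf.strictMono_values
      (hrange ▸ hr.values) h.values

end IsInterval

theorem IsOccurrence.update {f : Fin σ.1 → Fin π.1} (hf : IsOccurrence σ π f)
    {J : Set (Fin π.1)} (hJ : IsInterval π J) {i : Fin σ.1} {a : Fin π.1} (hi : f i ∈ J)
    (ha : a ∈ J) (hout : ∀ j, j ≠ i → f j ∉ J) : IsOccurrence σ π (Function.update f i a) := by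
  refine ⟨fun x y hxy => ?_, fun x y => ?_⟩
  · rw [update_lt_update_iff_of_ordConnected hJ.positions hi ha hout]
    exact hf.strictMono hxy
  · have hvalues := update_lt_update_iff_of_ordConnected (h := π.2 ∘ f) hJ.values
      (Set.mem_image_of_mem _ hi) (Set.mem_image_of_mem _ ha)
      (fun j hj => π.2.injective.mem_set_image.not.2 (hout j hj)) x y
    rw [← Function.comp_update] at hvalues
    exact (hf.2 x y).trans hvalues.symm

theorem hasIntervalCopy_iff : HasIntervalCopy π τ ↔
    ∃ f, IsOccurrence τ π f ∧ IsInterval π (Set.range f) := by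
  have hrange : ∀ f : Fin τ.1 → Fin π.1,
      Set.range (π.2 ∘ f ∘ τ.2.symm) = π.2 '' Set.range f := fun f => by
    rw [Set.range_comp, τ.2.symm.surjective.range_comp]
  constructor
  · rintro ⟨f, i, v, hi, hv, hlt⟩
    have hf : IsOccurrence τ π f := by
      refine ⟨fun a b hab => ?_, hlt⟩
      rw [Fin.lt_def, hi, hi]
      exact Nat.add_lt_add_left hab i
    refine ⟨f, hf, (ordConnected_range_iff_exists_val_eq_add hf.strictMono).2 ⟨i, hi⟩, ?_⟩
    rw [← hrange, ordConnected_range_iff_exists_val_eq_add hf.strictMono_values]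
    exact ⟨v, val_eq_add_of_strictMono_of_bounds hf.strictMono_values fun b => hv _⟩
  · rintro ⟨f, hf, hI⟩
    obtain ⟨i, hi⟩ := (ordConnected_range_iff_exists_val_eq_add hf.strictMono).1 hI.positions
    obtain ⟨v, hv⟩ := (ordConnected_range_iff_exists_val_eq_add hf.strictMono_values).1
      ((hrange f).symm ▸ hI.values)
    refine ⟨f, i, v, hi, fun a => ?_, hf.2⟩
    have ha : (π.2 (f a) : ℕ) = v + (τ.2 a : ℕ) := by simpa using hv (τ.2 a)
    omega

/-- The pattern formed by the entries of `π` at positions `S` is contained in `α`. -/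
def PatternOnLe (π : PPerm) (S : Set (Fin π.1)) (α : PPerm) : Prop :=
  ∃ τ f, Le τ α ∧ IsOccurrence τ π f ∧ Set.range f = S

namespace PatternOnLe

variable {S : Set (Fin π.1)}

theorem singleton (h : PatternOnLe π S α) (hS : S.Nonempty) (x : Fin π.1) :
    PatternOnLe π {x} α := by
  obtain ⟨τ, f, hτ, -, rfl⟩ := h
  obtain ⟨_, y, -⟩ := hS
  have : Nonempty (Fin one.1) := ⟨(0 : Fin 1)⟩
  exact ⟨one, fun _ => x, (isOccurrence_one y).le.trans hτ, isOccurrence_one x, Set.range_const⟩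

theorem image (h : PatternOnLe π S α) {f : Fin π.1 → Fin τ.1} (hf : IsOccurrence π τ f) :
    PatternOnLe τ (f '' S) α := by
  obtain ⟨υ, g, hυ, hg, rfl⟩ := h
  exact ⟨υ, f ∘ g, hυ, hf.comp hg, Set.range_comp f g⟩

theorem preimage (h : PatternOnLe π S α) {f : Fin σ.1 → Fin π.1} (hf : IsOccurrence σ π f) :
    PatternOnLe σ (f ⁻¹' S) α := by
  obtain ⟨τ, g, hτ, hg, rfl⟩ := h
  obtain ⟨υ, k, hk, hkr⟩ := exists_isOccurrence_range_eq σ (f ⁻¹' Set.range g)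
  refine ⟨υ, k, ((hf.comp hk).le_of_range_subset hg ?_).trans hτ, hk, hkr⟩
  rw [Set.range_comp, hkr]
  exact Set.image_preimage_subset f _

end PatternOnLe

/-- `π` contains an interval copy of some `α' ⊕ β'` with `α'`, `β'` nonempty, `α' ≤ α` and
`β' ≤ β`. -/
def HasIntervalSubsum (π α β : PPerm) : Prop :=
  ∃ α' β' : PPerm, 0 < α'.1 ∧ 0 < β'.1 ∧ Le α' α ∧ Le β' β ∧ HasIntervalCopy π (dsum α' β')

theorem hasIntervalSubsum_of_isBelow {A B : Set (Fin π.1)} (hA : A.Nonempty) (hB : B.Nonempty)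
    (hAB : IsBelow π A B) (hα : PatternOnLe π A α) (hβ : PatternOnLe π B β)
    (hI : IsInterval π (A ∪ B)) : HasIntervalSubsum π α β := by
  obtain ⟨α', f, hα', hf, rfl⟩ := hα
  obtain ⟨β', g, hβ', hg, rfl⟩ := hβ
  obtain ⟨k, hk, hkr⟩ := hf.exists_dsum hg hAB
  exact ⟨α', β', Fin.pos_iff_nonempty.2 (Set.range_nonempty_iff_nonempty.1 hA),
    Fin.pos_iff_nonempty.2 (Set.range_nonempty_iff_nonempty.1 hB), hα', hβ',
    hasIntervalCopy_iff.2 ⟨k, hk, hkr ▸ hI⟩⟩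

section Deletion

variable {m : Fin π.1} {e : Fin ρ.1 → Fin π.1} {f : Fin σ.1 → Fin π.1}

theorem IsOccurrence.lt_of_range_eq_compl (he : IsOccurrence ρ π e) (her : Set.range e = {m}ᶜ) :
    Lt ρ π := by
  refine ⟨he.le, ?_⟩
  rintro rfl
  rw [he.strictMono.eq_id, Set.range_id] at her
  exact (her ▸ Set.mem_univ m : m ∈ ({m}ᶜ : Set _)) rfl

theorem IsOccurrence.le_of_forall_ne (hf : IsOccurrence σ π f) (he : IsOccurrence ρ π e)
    (her : Set.range e = {m}ᶜ) (hne : ∀ x, f x ≠ m) : Le σ ρ :=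
  hf.le_of_range_subset he (her ▸ Set.range_subset_iff.2 hne)

/-- If the occurrence met `J` in `m` only, then `m` could be replaced by `a`. -/
theorem IsOccurrence.exists_mem_ne_of_not_le (hf : IsOccurrence σ π f) (he : IsOccurrence ρ π e)
    (her : Set.range e = {m}ᶜ) (hle : ¬ Le σ ρ) {J : Set (Fin π.1)} (hJ : IsInterval π J)
    (hm : m ∈ J) {a : Fin π.1} (ha : a ∈ J) (ham : a ≠ m) : ∃ x, f x ∈ J ∧ f x ≠ m := by
  by_contra! hout
  obtain ⟨i, rfl⟩ : ∃ i, f i = m := by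
    by_contra! hne
    exact hle (hf.le_of_forall_ne he her hne)
  have hmoved : IsOccurrence σ π (Function.update f i a) :=
    hf.update hJ hm ha fun j hj hjJ => hj (hf.strictMono.injective (hout j hjJ))
  refine hle (hmoved.le_of_forall_ne he her fun x => ?_)
  by_cases hx : x = i
  · rwa [hx, Function.update_self]
  · rw [Function.update_of_ne hx]
    exact hf.strictMono.injective.ne hx

end Deletion

/-- The blocks `A` and `B` and the entry at `m` exhibit in `π` an interval copy of a permutation
`α' ⊕ 1 ⊕ β'` with `α'`, `β'` nonempty, `α' ≤ α` and `β' ≤ β`. -/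
structure IsSandwich (α β π : PPerm) (A : Set (Fin π.1)) (m : Fin π.1) (B : Set (Fin π.1)) :
    Prop where
  left_nonempty : A.Nonempty
  right_nonempty : B.Nonempty
  left_below : IsBelow π A {m}
  below_right : IsBelow π {m} B
  left_pattern : PatternOnLe π A α
  right_pattern : PatternOnLe π B β
  isInterval : IsInterval π (A ∪ {m} ∪ B)

namespace IsSandwich

variable {A B : Set (Fin π.1)} {m : Fin π.1}

theorem left_below_right (h : IsSandwich α β π A m B) : IsBelow π A B :=
  h.left_below.trans h.below_right (Set.singleton_nonempty m)

theorem isInterval_left (h : IsSandwich α β π A m B) : IsInterval π (A ∪ {m}) :=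
  h.isInterval.left_of_union (h.left_below_right.union_left h.below_right)

theorem isInterval_right (h : IsSandwich α β π A m B) : IsInterval π ({m} ∪ B) := by
  have hI := h.isInterval
  rw [Set.union_assoc] at hI
  exact hI.right_of_union (h.left_below.union_right h.left_below_right)

theorem hasIntervalSubsum (h : IsSandwich α β π A m B) : HasIntervalSubsum π α β :=
  hasIntervalSubsum_of_isBelow h.left_nonempty (Set.singleton_nonempty m) h.left_below
    h.left_pattern (h.right_pattern.singleton h.right_nonempty m) h.isInterval_left

theorem hasIntervalSubsum_of_range_eq_compl (h : IsSandwich α β π A m B)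
    {e : Fin ρ.1 → Fin π.1} (he : IsOccurrence ρ π e) (her : Set.range e = {m}ᶜ) :
    HasIntervalSubsum ρ α β := by
  have hA : A ⊆ Set.range e := fun a ha => her ▸ (h.left_below a ha m rfl).1.ne
  have hB : B ⊆ Set.range e := fun b hb => her ▸ (h.below_right m rfl b hb).1.ne'
  have hm : e ⁻¹' {m} = ∅ := Set.preimage_eq_empty (by simp [her])
  have hI := h.isInterval.preimage he
  rw [Set.preimage_union, Set.preimage_union, hm, Set.union_empty] at hI
  exact hasIntervalSubsum_of_isBelow (h.left_nonempty.preimage' hA)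
    (h.right_nonempty.preimage' hB) (h.left_below_right.preimage he)
    (h.left_pattern.preimage he) (h.right_pattern.preimage he) hI

theorem image (h : IsSandwich α β π A m B) {f : Fin π.1 → Fin τ.1} (hf : IsOccurrence π τ f)
    (hr : IsInterval τ (Set.range f)) : IsSandwich α β τ (f '' A) (f m) (f '' B) where
  left_nonempty := h.left_nonempty.image f
  right_nonempty := h.right_nonempty.image f
  left_below := by simpa only [Set.image_singleton] using h.left_below.image hf
  below_right := by simpa only [Set.image_singleton] using h.below_right.image hf
  left_pattern := h.left_pattern.image hf
  right_pattern := h.right_pattern.image hf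
  isInterval := by
    simpa only [Set.image_union, Set.image_singleton] using h.isInterval.image hf hr

theorem exists_preimage_of_not_le (h : IsSandwich α β π A m B) {e : Fin ρ.1 → Fin π.1}
    (he : IsOccurrence ρ π e) (her : Set.range e = {m}ᶜ) {f : Fin σ.1 → Fin π.1}
    (hf : IsOccurrence σ π f) (hle : ¬ Le σ ρ) :
    ∃ i, IsSandwich α β σ (f ⁻¹' A) i (f ⁻¹' B) := by
  obtain ⟨i, rfl⟩ : ∃ i, f i = m := by
    by_contra! hne
    exact hle (hf.le_of_forall_ne he her hne)
  have hi : f ⁻¹' {f i} = {i} := by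
    ext x
    exact hf.strictMono.injective.eq_iff
  obtain ⟨a, ha⟩ := h.left_nonempty
  obtain ⟨b, hb⟩ := h.right_nonempty
  obtain ⟨x, hxA | hxi, hx⟩ := hf.exists_mem_ne_of_not_le he her hle h.isInterval_left
    (.inr rfl) (.inl ha) (h.left_below a ha _ rfl).1.ne
  case inr => exact absurd hxi hx
  obtain ⟨y, hyi | hyB, hy⟩ := hf.exists_mem_ne_of_not_le he her hle h.isInterval_right
    (.inl rfl) (.inr hb) (h.below_right _ rfl b hb).1.ne'
  case inl => exact absurd hyi hy
  refine ⟨i, ⟨x, hxA⟩, ⟨y, hyB⟩, ?_, ?_, h.left_pattern.preimage hf,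
    h.right_pattern.preimage hf, ?_⟩
  · simpa only [hi] using h.left_below.preimage hf
  · simpa only [hi] using h.below_right.preimage hf
  · simpa only [Set.preimage_union, hi] using h.isInterval.preimage hf

theorem mu_eq_zero (hσ : ¬ HasIntervalSubsum σ α β) (h : IsSandwich α β π A m B) :
    mu σ π = 0 := by
  induction hn : π.1 using Nat.strong_induction_on generalizing π with
  | _ n ih =>
    obtain ⟨ρ, e, he, her⟩ := exists_isOccurrence_range_eq π {m}ᶜ
    refine mu_eq_zero_of_forall_not_le (he.lt_of_range_eq_compl her) ?_ ?_ ?_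
    · rintro rfl
      exact hσ h.hasIntervalSubsum
    · rintro rfl
      exact hσ (h.hasIntervalSubsum_of_range_eq_compl he her)
    · rintro l ⟨⟨f, hf⟩, hne⟩ hlρ
      obtain ⟨i, hl⟩ := h.exists_preimage_of_not_le he her hf hlρ
      exact ih l.1 (hn ▸ Le.length_lt ⟨f, hf⟩ hne) hl rfl

theorem isSigmaAnnihilator (hσ : ¬ HasIntervalSubsum σ α β) (h : IsSandwich α β π A m B) :
    IsSigmaAnnihilator σ π := by
  intro τ hτ
  obtain ⟨f, hf, hr⟩ := hasIntervalCopy_iff.1 hτ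
  exact (h.image hf hr).mu_eq_zero hσ

end IsSandwich

/-- The position of the summand `1` in `α ⊕ 1 ⊕ β`. -/
def dsumMid (α β : PPerm) : Fin (dsum α (dsum one β)).1 :=
  dsumInr α (dsum one β) (dsumInl one β (0 : Fin 1))

theorem range_dsumInl_one (β : PPerm) :
    Set.range (dsumInl one β) = {dsumInl one β (0 : Fin 1)} :=
  Set.range_unique (ι := Fin 1) (f := dsumInl one β)

theorem range_dsumInr_dsum_one (α β : PPerm) : Set.range (dsumInr α (dsum one β)) =
    {dsumMid α β} ∪ Set.range (dsumInr α (dsum one β) ∘ dsumInr one β) := by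
  rw [← Set.image_univ, ← range_dsumInl_union_range_dsumInr, Set.image_union, range_dsumInl_one,
    Set.image_singleton, ← Set.range_comp, dsumMid]

theorem isBelow_range_dsumInl_dsumMid (α β : PPerm) : IsBelow (dsum α (dsum one β))
    (Set.range (dsumInl α (dsum one β))) {dsumMid α β} :=
  (isBelow_range_dsumInl_range_dsumInr α (dsum one β)).mono subset_rfl <| by
    rw [range_dsumInr_dsum_one]
    exact Set.subset_union_left

theorem isBelow_dsumMid_range_dsumInr (α β : PPerm) : IsBelow (dsum α (dsum one β))
    {dsumMid α β} (Set.range (dsumInr α (dsum one β) ∘ dsumInr one β)) := by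
  have h := (isBelow_range_dsumInl_range_dsumInr one β).image (isOccurrence_dsumInr α _)
  rwa [range_dsumInl_one, Set.image_singleton, ← Set.range_comp] at h

theorem range_union_dsumMid_union_range (α β : PPerm) :
    Set.range (dsumInl α (dsum one β)) ∪ {dsumMid α β} ∪
      Set.range (dsumInr α (dsum one β) ∘ dsumInr one β) = Set.univ := by
  rw [Set.union_assoc, ← range_dsumInr_dsum_one, range_dsumInl_union_range_dsumInr]

theorem isSandwich_dsum_one_dsum (hα : 0 < α.1) (hβ : 0 < β.1) :
    IsSandwich α β (dsum α (dsum one β)) (Set.range (dsumInl α (dsum one β))) (dsumMid α β)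
      (Set.range (dsumInr α (dsum one β) ∘ dsumInr one β)) where
  left_nonempty := ⟨_, ⟨0, hα⟩, rfl⟩
  right_nonempty := ⟨_, ⟨0, hβ⟩, rfl⟩
  left_below := isBelow_range_dsumInl_dsumMid α β
  below_right := isBelow_dsumMid_range_dsumInr α β
  left_pattern := ⟨α, _, Le.refl α, isOccurrence_dsumInl _ _, rfl⟩
  right_pattern :=
    ⟨β, _, Le.refl β, (isOccurrence_dsumInr _ _).comp (isOccurrence_dsumInr _ _), rfl⟩
  isInterval := range_union_dsumMid_union_range α β ▸ isInterval_univ _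

theorem exists_isOccurrence_dsum_range_eq_compl_dsumMid (α β : PPerm) :
    ∃ e, IsOccurrence (dsum α β) (dsum α (dsum one β)) e ∧ Set.range e = {dsumMid α β}ᶜ := by
  have hleft := isBelow_range_dsumInl_dsumMid α β
  have hright := isBelow_dsumMid_range_dsumInr α β
  obtain ⟨e, he, her⟩ := (isOccurrence_dsumInl α (dsum one β)).exists_dsum
    ((isOccurrence_dsumInr α (dsum one β)).comp (isOccurrence_dsumInr one β))
    (hleft.trans hright (Set.singleton_nonempty _))
  refine ⟨e, he, her ▸ Set.Subset.antisymm ?_ fun x hx => ?_⟩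
  · exact Set.union_subset (fun a ha => (hleft a ha _ rfl).1.ne)
      fun b hb => (hright _ rfl b hb).1.ne'
  · rcases (range_union_dsumMid_union_range α β).ge (Set.mem_univ x) with (hxl | hxm) | hxr
    · exact .inl hxl
    · exact absurd hxm hx
    · exact .inr hxr

end PPerm

/-- **(Proposition `pro-sum`.)**  Let `α` and `β` be nonempty permutations,
and let `σ` be a nonempty permutation containing no interval copy of any
permutation `α′ ⊕ β′` with `α′, β′` nonempty, `α′ ≤ α` and `β′ ≤ β`.  Then
`α ⊕ 1 ⊕ β` is `σ`-narrow with `σ`-core `α ⊕ β`, and `α ⊕ 1 ⊕ β` is a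
`σ`-annihilator. -/
theorem sum_one_sum_isSigmaAnnihilator (σ α β : PPerm)
    (hσ : 0 < σ.1) (hα : 0 < α.1) (hβ : 0 < β.1)
    (hfree : ∀ α' β' : PPerm, 0 < α'.1 → 0 < β'.1 → PPerm.Le α' α → PPerm.Le β' β →
      ¬ HasIntervalCopy σ (PPerm.dsum α' β')) :
    IsSigmaNarrowWithCore σ (PPerm.dsum α (PPerm.dsum PPerm.one β)) (PPerm.dsum α β) ∧
      IsSigmaAnnihilator σ (PPerm.dsum α (PPerm.dsum PPerm.one β)) := by
  have hfree' : ¬ PPerm.HasIntervalSubsum σ α β := by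
    rintro ⟨α', β', hα', hβ', hle, hle', hcopy⟩
    exact hfree α' β' hα' hβ' hle hle' hcopy
  have hsandwich := PPerm.isSandwich_dsum_one_dsum hα hβ
  obtain ⟨e, he, her⟩ := PPerm.exists_isOccurrence_dsum_range_eq_compl_dsumMid α β
  refine ⟨⟨?_, he.le, ?_⟩, hsandwich.isSigmaAnnihilator hfree'⟩
  · change α.1 + β.1 + 1 = α.1 + (1 + β.1)
    omega
  · rintro l - ⟨⟨f, hf⟩, -⟩ hle
    obtain ⟨i, hl⟩ := hsandwich.exists_preimage_of_not_le he her hf hle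
    exact hl.isSigmaAnnihilator hfree'
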